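/- Let 𝒳 be a finite nonempty set, let P be a probability mass function on 𝒳, let ρ > 0, let M be a positive integer, and let f : 𝒳 → {1,…,M}. If N denotes the number of nonempty sets among the preimages f⁻¹(m) = {x ∈ 𝒳 : f(x) = m}, m = 1,…,M, then Σ_{x∈𝒳} P(x)·|f⁻¹(f(x))|^ρ ≥ 2^{ρ·(H_{1/(1+ρ)}(P) − log₂ N)}. -/

import Mathlib

open Filter Real

/-- The Rényi entropy of order `1/(1+ρ)` (base-2 logarithm) of a PMF `P`. -/
noncomputable def renyiEnt {Y : Type*} [Fintype Y] (ρ : ℝ) (P : Y → ℝ) : ℝ :=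
  ((1 + ρ) / ρ) * Real.logb 2 (∑ y, P y ^ ((1 : ℝ) / (1 + ρ)))

/-! Let `L x = |f⁻¹(f x)|`. Each nonempty fibre of `f` contributes exactly `1` to `∑ x, 1 / L x`, so
this sum is the number `N` of nonempty fibres. Hölder's inequality with weights `1 / L x`, applied
to `P x ^ (1 / (1 + ρ)) * L x`, therefore gives
`(∑ x, P x ^ (1 / (1 + ρ))) ^ (1 + ρ) ≤ N ^ ρ * ∑ x, P x * L x ^ ρ`, and the left-hand side is
`2 ^ (ρ * renyiEnt ρ P)`. -/

theorem sum_inv_card_fiber {ι κ K : Type*} [DecidableEq κ] [DivisionRing K] [CharZero K]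
    (s : Finset ι) (f : ι → κ) :
    ∑ i ∈ s, ((s.filter fun j => f j = f i).card : K)⁻¹ = (s.image f).card := by
  rw [Finset.card_eq_sum_ones, Nat.cast_sum, Nat.cast_one]
  refine (Finset.sum_image' _ fun i hi => ?_).symm
  have fiber_nonempty : (s.filter fun j => f j = f i).Nonempty :=
    ⟨i, Finset.mem_filter.mpr ⟨hi, rfl⟩⟩
  calc (1 : K)
      = (s.filter fun j => f j = f i).card * ((s.filter fun j => f j = f i).card : K)⁻¹ :=
        (mul_inv_cancel₀ (Nat.cast_ne_zero.mpr fiber_nonempty.card_ne_zero)).symm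
    _ = ∑ j ∈ s with f j = f i, ((s.filter fun k => f k = f i).card : K)⁻¹ := by
        rw [Finset.sum_const, nsmul_eq_mul]
    _ = ∑ j ∈ s with f j = f i, ((s.filter fun k => f k = f j).card : K)⁻¹ :=
        Finset.sum_congr rfl fun j hj => by rw [(Finset.mem_filter.mp hj).2]

theorem rpow_sum_mul_le_rpow_sum_mul_sum_mul_rpow {ι : Type*} (s : Finset ι) {p : ℝ} (hp : 1 ≤ p)
    (w a : ι → ℝ) (hw : ∀ i, 0 ≤ w i) (ha : ∀ i, 0 ≤ a i) :
    (∑ i ∈ s, w i * a i) ^ p ≤ (∑ i ∈ s, w i) ^ (p - 1) * ∑ i ∈ s, w i * a i ^ p := by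
  have p_ne_zero : p ≠ 0 := by positivity
  have sum_w_nonneg : 0 ≤ ∑ i ∈ s, w i := Finset.sum_nonneg fun i _ => hw i
  have sum_wa_nonneg : 0 ≤ ∑ i ∈ s, w i * a i :=
    Finset.sum_nonneg fun i _ => mul_nonneg (hw i) (ha i)
  have sum_wap_nonneg : 0 ≤ ∑ i ∈ s, w i * a i ^ p :=
    Finset.sum_nonneg fun i _ => mul_nonneg (hw i) (rpow_nonneg (ha i) p)
  calc (∑ i ∈ s, w i * a i) ^ p
      ≤ ((∑ i ∈ s, w i) ^ (1 - p⁻¹) * (∑ i ∈ s, w i * a i ^ p) ^ p⁻¹) ^ p := by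
        gcongr
        exact inner_le_weight_mul_Lp_of_nonneg s hp w a hw ha
    _ = (∑ i ∈ s, w i) ^ ((1 - p⁻¹) * p) * ∑ i ∈ s, w i * a i ^ p := by
        rw [mul_rpow (rpow_nonneg sum_w_nonneg _) (rpow_nonneg sum_wap_nonneg _),
          ← rpow_mul sum_w_nonneg, rpow_inv_rpow sum_wap_nonneg p_ne_zero]
    _ = (∑ i ∈ s, w i) ^ (p - 1) * ∑ i ∈ s, w i * a i ^ p := by
        rw [sub_mul, one_mul, inv_mul_cancel₀ p_ne_zero]

section Preimages

variable {X Y : Type*} [Fintype X] [DecidableEq Y] {ρ : ℝ} {P : X → ℝ}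

theorem rpow_sum_rpow_le_card_image_rpow_mul_sum (hρ : 0 ≤ ρ) (hP : ∀ x, 0 ≤ P x) (f : X → Y) :
    (∑ x, P x ^ (1 / (1 + ρ))) ^ (1 + ρ) ≤
      ((Finset.univ.image f).card : ℝ) ^ ρ *
        ∑ x, P x * ((Finset.univ.filter fun y => f y = f x).card : ℝ) ^ ρ := by
  set L : X → ℝ := fun x => (Finset.univ.filter fun y => f y = f x).card
  have L_pos (x : X) : 0 < L x :=
    Nat.cast_pos.mpr (Finset.card_pos.mpr ⟨x, (Finset.mem_filter_univ x).mpr rfl⟩)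
  have sum_inv_L : ∑ x, (L x)⁻¹ = (Finset.univ.image f).card := sum_inv_card_fiber Finset.univ f
  have weighted_term (x : X) : (L x)⁻¹ * (P x ^ (1 / (1 + ρ)) * L x) = P x ^ (1 / (1 + ρ)) := by
    rw [mul_comm, mul_inv_cancel_right₀ (L_pos x).ne']
  have weighted_rpow_term (x : X) :
      (L x)⁻¹ * (P x ^ (1 / (1 + ρ)) * L x) ^ (1 + ρ) = P x * L x ^ ρ := by
    rw [mul_rpow (rpow_nonneg (hP x) _) (L_pos x).le, one_div,
      rpow_inv_rpow (hP x) (by positivity), rpow_one_add' (L_pos x).le (by positivity),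
      mul_left_comm, inv_mul_cancel_left₀ (L_pos x).ne']
  simpa only [weighted_term, weighted_rpow_term, sum_inv_L, add_sub_cancel_left] using
    rpow_sum_mul_le_rpow_sum_mul_sum_mul_rpow Finset.univ (le_add_of_nonneg_right hρ)
      (fun x => (L x)⁻¹) (fun x => P x ^ (1 / (1 + ρ)) * L x)
      (fun x => inv_nonneg.mpr (L_pos x).le)
      (fun x => mul_nonneg (rpow_nonneg (hP x) _) (L_pos x).le)

theorem two_rpow_mul_renyiEnt (hρ : ρ ≠ 0) (hP : 0 < ∑ x, P x ^ (1 / (1 + ρ))) :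
    (2 : ℝ) ^ (ρ * renyiEnt ρ P) = (∑ x, P x ^ (1 / (1 + ρ))) ^ (1 + ρ) := by
  rw [renyiEnt, ← mul_assoc, mul_div_cancel₀ _ hρ, mul_comm, rpow_mul two_pos.le,
    rpow_logb two_pos (by norm_num) hP]

theorem tasks_lower_bound_nonempty_preimages_general (hP : ∀ x, 0 ≤ P x) (hP_ne : P ≠ 0)
    (hρ : 0 < ρ) (f : X → Y) :
    (2 : ℝ) ^ (ρ * (renyiEnt ρ P - logb 2 (Finset.univ.image f).card)) ≤
      ∑ x, P x * ((Finset.univ.filter fun y => f y = f x).card : ℝ) ^ ρ := by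
  obtain ⟨x₀, hx₀⟩ := Function.ne_iff.mp hP_ne
  have sum_pos : 0 < ∑ x, P x ^ (1 / (1 + ρ)) :=
    Finset.sum_pos' (fun x _ => rpow_nonneg (hP x) _)
      ⟨x₀, Finset.mem_univ x₀, rpow_pos_of_pos ((hP x₀).lt_of_ne' hx₀) _⟩
  have card_pos : (0 : ℝ) < (Finset.univ.image f).card :=
    Nat.cast_pos.mpr (Finset.card_pos.mpr ⟨f x₀, Finset.mem_image_of_mem f (Finset.mem_univ x₀)⟩)
  rw [mul_sub, rpow_sub two_pos, two_rpow_mul_renyiEnt hρ.ne' sum_pos, mul_comm ρ (logb _ _),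
    rpow_mul two_pos.le, rpow_logb two_pos (by norm_num) card_pos,
    div_le_iff₀' (rpow_pos_of_pos card_pos ρ)]
  exact rpow_sum_rpow_le_card_image_rpow_mul_sum hρ.le hP f

end Preimages

/-- refined lower bound in terms of the number `N` of nonempty preimages. -/
theorem tasks_lower_bound_nonempty_preimages {X : Type*} [Fintype X] [Nonempty X]
    (P : X → ℝ) (hP0 : ∀ x, 0 ≤ P x) (hP1 : ∑ x, P x = 1)
    (ρ : ℝ) (hρ : 0 < ρ) (M : ℕ) (hM : 0 < M) (f : X → Fin M)
    (N : ℕ) (hN : N = (Finset.univ.filter fun m : Fin M => ∃ x, f x = m).card) :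
    (2 : ℝ) ^ (ρ * (renyiEnt ρ P - Real.logb 2 (N : ℝ))) ≤
      ∑ x, P x * ((Finset.univ.filter fun y => f y = f x).card : ℝ) ^ ρ := by
  rw [hN, Finset.univ_filter_exists]
  exact tasks_lower_bound_nonempty_preimages_general hP0 (by rintro rfl; simp at hP1) hρ f
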